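/- arXiv:1105.1605 — 2 statements merged into one kernel-verified Lean document; each statement's English description precedes it below -/
import Mathlib

section
/- Let (X, d) be a non-Archimedean metric space and let B₁, B₂ be two balls in X. Then their Hausdorff distance satisfies: d_H(B₁, B₂) = dist(B₁, B₂) if B₁ ∩ B₂ = ∅; d_H(B₁, B₂) = max{diam(B₁), diam(B₂)} if B₁ ∩ B₂ ≠ ∅ and B₁ ≠ B₂; and d_H(B₁, B₂) = 0 if B₁ = B₂. In particular, d_H(B₁, B₂) ≥ max{diam(B₁), diam(B₂)} whenever B₁ ≠ B₂. Moreover, for any non-empty subsets A₁ ⊆ B₁ and A₂ ⊆ B₂, if B₁ ∩ B₂ = ∅ then d_H(A₁, A₂) = d_H(B₁, B₂). -/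
open scoped ENNReal

/-- A ball in a metric space: an open or closed ball of positive radius. -/
def IsBall {X : Type*} [MetricSpace X] (B : Set X) : Prop :=
  ∃ (a : X) (r : ℝ), 0 < r ∧ (B = Metric.ball a r ∨ B = Metric.closedBall a r)

/-- The distance between two subsets: `inf { d(x,y) : x ∈ A, y ∈ B }`. -/
noncomputable def setEDist {X : Type*} [MetricSpace X] (A B : Set X) : ℝ≥0∞ :=
  ⨅ x ∈ A, ⨅ y ∈ B, edist x y

/-!
The only property of balls in an ultrametric space `X` that matters is that no point outside a
ball `B` is closer to `B` than its diameter. Hence `d(x, y)` is the same for all points `x`, `y` of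
two given disjoint balls. If `B₁ ≠ B₂`, some point of one, say `B₂`, lies outside the
other, so `diam B₁ ≤ d_H(B₁, B₂)`. As `diam B₂ ≤ max (diam B₁) (d_H(B₁, B₂))` for arbitrary subsets
of `X`, also `diam B₂ ≤ d_H(B₁, B₂)`. When the balls meet, a common point gives the reverse bound.
-/

open Metric

/-- The strong triangle inequality for extended distances, the counterpart of
`IsUltrametricDist`. -/
class IsUltrametricEDist (X : Type*) [EDist X] : Prop where
  edist_triangle_max : ∀ x y z : X, edist x z ≤ max (edist x y) (edist y z)

open IsUltrametricEDist (edist_triangle_max)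

instance {X : Type*} [PseudoMetricSpace X] [IsUltrametricDist X] : IsUltrametricEDist X where
  edist_triangle_max x y z := by
    simp only [edist_dist, ← ENNReal.ofReal_max]
    exact ENNReal.ofReal_le_ofReal (dist_triangle_max x y z)

/-- A set is a cluster if no point outside it is closer to it than its diameter. Besides the
balls of an ultrametric space, this includes all singletons and the whole space. -/
def IsCluster {X : Type*} [PseudoEMetricSpace X] (s : Set X) : Prop :=
  ∀ z ∉ s, ediam s ≤ infEDist z s

section PseudoEMetricSpace

variable {X : Type*} [PseudoEMetricSpace X] {s t : Set X}

theorem hausdorffEDist_le_max_ediam (h : (s ∩ t).Nonempty) :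
    hausdorffEDist s t ≤ max (ediam s) (ediam t) := by
  obtain ⟨p, hps, hpt⟩ := h
  exact hausdorffEDist_le_of_mem_edist
    (fun x hx => ⟨p, hpt, le_max_of_le_left (edist_le_ediam_of_mem hx hps)⟩)
    (fun y hy => ⟨p, hps, le_max_of_le_right (edist_le_ediam_of_mem hy hpt)⟩)

theorem hausdorffEDist_eq_of_forall_edist_eq {c : ℝ≥0∞} (hs : s.Nonempty) (ht : t.Nonempty)
    (h : ∀ x ∈ s, ∀ y ∈ t, edist x y = c) : hausdorffEDist s t = c := by
  obtain ⟨a, ha⟩ := hs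
  obtain ⟨b, hb⟩ := ht
  apply le_antisymm
  · exact hausdorffEDist_le_of_mem_edist (fun x hx => ⟨b, hb, (h x hx b hb).le⟩)
      (fun y hy => ⟨a, ha, (edist_comm y a).trans_le (h a ha y hy).le⟩)
  · calc
      c ≤ infEDist a t := le_infEDist.2 fun y hy => (h a ha y hy).ge
      _ ≤ hausdorffEDist s t := infEDist_le_hausdorffEDist_of_mem ha

namespace IsCluster

theorem edist_le_edist (hs : IsCluster s) {x y y' z : X} (hx : x ∈ s) (hy : y ∈ s) (hy' : y' ∈ s)
    (hz : z ∉ s) : edist y y' ≤ edist x z :=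
  calc
    edist y y' ≤ ediam s := edist_le_ediam_of_mem hy hy'
    _ ≤ infEDist z s := hs z hz
    _ ≤ edist z x := infEDist_le_edist_of_mem hx
    _ = edist x z := edist_comm z x

theorem ediam_le_hausdorffEDist_of_not_subset (hs : IsCluster s) (h : ¬t ⊆ s) :
    ediam s ≤ hausdorffEDist s t := by
  obtain ⟨z, hzt, hzs⟩ := Set.not_subset.1 h
  rw [hausdorffEDist_comm]
  exact (hs z hzs).trans (infEDist_le_hausdorffEDist_of_mem hzt)

end IsCluster

end PseudoEMetricSpace

section Ultrametric

variable {X : Type*} [PseudoEMetricSpace X] [IsUltrametricEDist X] {s t : Set X}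

theorem isCluster_eball (a : X) (r : ℝ≥0∞) : IsCluster (eball a r) := by
  intro z hz
  have diam_le : ediam (eball a r) ≤ r := ediam_le fun x hx y hy =>
    (edist_triangle_max x a y).trans (max_le (mem_eball.1 hx).le (mem_eball'.1 hy).le)
  refine diam_le.trans (le_infEDist.2 fun y hy => ?_)
  by_contra! hzy
  exact hz ((edist_triangle_max z y a).trans_lt (max_lt hzy hy))

theorem isCluster_closedEBall (a : X) (r : ℝ≥0∞) : IsCluster (closedEBall a r) := by
  intro z hz
  have diam_le : ediam (closedEBall a r) ≤ r := ediam_le fun x hx y hy =>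
    (edist_triangle_max x a y).trans (max_le hx (mem_closedEBall'.1 hy))
  refine diam_le.trans (le_infEDist.2 fun y hy => ?_)
  by_contra! hzy
  exact hz ((edist_triangle_max z y a).trans (max_le hzy.le hy))

theorem ediam_le_max_ediam_hausdorffEDist (s t : Set X) :
    ediam t ≤ max (ediam s) (hausdorffEDist s t) := by
  refine ediam_le fun y hy y' hy' => le_of_forall_gt_imp_ge_of_dense fun r hr => ?_
  obtain ⟨hdiam, hdist⟩ := max_lt_iff.1 hr
  rw [hausdorffEDist_comm] at hdist
  obtain ⟨x, hx, hyx⟩ := exists_edist_lt_of_hausdorffEDist_lt hy hdist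
  obtain ⟨x', hx', hyx'⟩ := exists_edist_lt_of_hausdorffEDist_lt hy' hdist
  calc
    edist y y' ≤ max (edist y x) (edist x y') := edist_triangle_max y x y'
    _ ≤ max (edist y x) (max (edist x x') (edist x' y')) :=
      max_le_max_left _ (edist_triangle_max x x' y')
    _ ≤ r := max_le hyx.le <| max_le ((edist_le_ediam_of_mem hx hx').trans hdiam.le) <|
      (edist_comm x' y').trans_le hyx'.le

namespace IsCluster

theorem edist_left_eq (hs : IsCluster s) {x x' z : X} (hx : x ∈ s) (hx' : x' ∈ s) (hz : z ∉ s) :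
    edist x z = edist x' z :=
  le_antisymm
    ((edist_triangle_max x x' z).trans (max_le (hs.edist_le_edist hx' hx hx' hz) le_rfl))
    ((edist_triangle_max x' x z).trans (max_le (hs.edist_le_edist hx hx' hx hz) le_rfl))

theorem edist_eq_of_disjoint (hs : IsCluster s) (ht : IsCluster t) (hst : Disjoint s t)
    {x x' y y' : X} (hx : x ∈ s) (hx' : x' ∈ s) (hy : y ∈ t) (hy' : y' ∈ t) :
    edist x y = edist x' y' :=
  calc
    edist x y = edist x' y := hs.edist_left_eq hx hx' (hst.notMem_of_mem_right hy)
    _ = edist y x' := edist_comm x' y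
    _ = edist y' x' := ht.edist_left_eq hy hy' (hst.notMem_of_mem_left hx')
    _ = edist x' y' := edist_comm y' x'

theorem hausdorffEDist_eq_edist (hs : IsCluster s) (ht : IsCluster t) (hst : Disjoint s t)
    {A B : Set X} (hAs : A ⊆ s) (hBt : B ⊆ t) (hA : A.Nonempty) (hB : B.Nonempty)
    {a b : X} (ha : a ∈ s) (hb : b ∈ t) : hausdorffEDist A B = edist a b :=
  hausdorffEDist_eq_of_forall_edist_eq hA hB fun _ hx _ hy =>
    hs.edist_eq_of_disjoint ht hst (hAs hx) ha (hBt hy) hb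

theorem hausdorffEDist_eq_iInf_infEDist (hs : IsCluster s) (ht : IsCluster t) (hst : Disjoint s t)
    (hs₀ : s.Nonempty) (ht₀ : t.Nonempty) : hausdorffEDist s t = ⨅ x ∈ s, infEDist x t := by
  have eq_edist {x y : X} (hx : x ∈ s) (hy : y ∈ t) : hausdorffEDist s t = edist x y :=
    hs.hausdorffEDist_eq_edist ht hst subset_rfl subset_rfl hs₀ ht₀ hx hy
  apply le_antisymm
  · exact le_iInf₂ fun x hx => le_infEDist.2 fun y hy => (eq_edist hx hy).le
  · obtain ⟨a, ha⟩ := hs₀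
    obtain ⟨b, hb⟩ := ht₀
    calc
      ⨅ x ∈ s, infEDist x t ≤ infEDist a t := iInf₂_le a ha
      _ ≤ edist a b := infEDist_le_edist_of_mem hb
      _ = hausdorffEDist s t := (eq_edist ha hb).symm

theorem max_ediam_le_hausdorffEDist_of_not_subset (hs : IsCluster s) (h : ¬t ⊆ s) :
    max (ediam s) (ediam t) ≤ hausdorffEDist s t := by
  have ediam_left_le := hs.ediam_le_hausdorffEDist_of_not_subset h
  exact max_le ediam_left_le <|
    (ediam_le_max_ediam_hausdorffEDist s t).trans (max_le ediam_left_le le_rfl)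

theorem max_ediam_le_hausdorffEDist (hs : IsCluster s) (ht : IsCluster t) (hne : s ≠ t) :
    max (ediam s) (ediam t) ≤ hausdorffEDist s t := by
  by_cases hts : t ⊆ s
  · rw [max_comm, hausdorffEDist_comm]
    exact ht.max_ediam_le_hausdorffEDist_of_not_subset fun hst => hne (hst.antisymm hts)
  · exact hs.max_ediam_le_hausdorffEDist_of_not_subset hts

end IsCluster

theorem stmt_0_general {B₁ B₂ : Set X} (h₁ : IsCluster B₁) (h₂ : IsCluster B₂)
    (hB₁ : B₁.Nonempty) (hB₂ : B₂.Nonempty) :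
    (B₁ ∩ B₂ = ∅ → hausdorffEDist B₁ B₂ = ⨅ x ∈ B₁, infEDist x B₂) ∧
    (B₁ ∩ B₂ ≠ ∅ → B₁ ≠ B₂ → hausdorffEDist B₁ B₂ = max (ediam B₁) (ediam B₂)) ∧
    (B₁ = B₂ → hausdorffEDist B₁ B₂ = 0) ∧
    (B₁ ≠ B₂ → max (ediam B₁) (ediam B₂) ≤ hausdorffEDist B₁ B₂) ∧
    (∀ A₁ A₂ : Set X, A₁.Nonempty → A₂.Nonempty → A₁ ⊆ B₁ → A₂ ⊆ B₂ → B₁ ∩ B₂ = ∅ →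
      hausdorffEDist A₁ A₂ = hausdorffEDist B₁ B₂) := by
  refine ⟨fun hd => ?_, fun hi hne => ?_, ?_, h₁.max_ediam_le_hausdorffEDist h₂, ?_⟩
  · exact h₁.hausdorffEDist_eq_iInf_infEDist h₂ (Set.disjoint_iff_inter_eq_empty.2 hd) hB₁ hB₂
  · exact (hausdorffEDist_le_max_ediam (Set.nonempty_iff_ne_empty.2 hi)).antisymm
      (h₁.max_ediam_le_hausdorffEDist h₂ hne)
  · rintro rfl
    exact hausdorffEDist_self
  · intro A₁ A₂ hA₁ hA₂ hAB₁ hAB₂ hd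
    have hdisj : Disjoint B₁ B₂ := Set.disjoint_iff_inter_eq_empty.2 hd
    obtain ⟨a, ha⟩ := hB₁
    obtain ⟨b, hb⟩ := hB₂
    rw [h₁.hausdorffEDist_eq_edist h₂ hdisj hAB₁ hAB₂ hA₁ hA₂ ha hb,
      h₁.hausdorffEDist_eq_edist h₂ hdisj subset_rfl subset_rfl ⟨a, ha⟩ ⟨b, hb⟩ ha hb]

end Ultrametric

namespace IsBall

variable {X : Type*} [MetricSpace X] {B : Set X}

theorem nonempty (hB : IsBall B) : B.Nonempty := by
  obtain ⟨a, r, hr, rfl | rfl⟩ := hB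
  · exact nonempty_ball.2 hr
  · exact nonempty_closedBall.2 hr.le

theorem isCluster [IsUltrametricDist X] (hB : IsBall B) : IsCluster B := by
  obtain ⟨a, r, hr, rfl | rfl⟩ := hB
  · rw [← eball_ofReal]
    exact isCluster_eball a _
  · rw [← closedEBall_ofReal hr.le]
    exact isCluster_closedEBall a _

end IsBall

theorem stmt_0 {X : Type*} [MetricSpace X]
    (hna : ∀ x y z : X, dist x z ≤ max (dist x y) (dist y z))
    (B₁ B₂ : Set X) (h₁ : IsBall B₁) (h₂ : IsBall B₂) :
    (B₁ ∩ B₂ = ∅ → EMetric.hausdorffEdist B₁ B₂ = setEDist B₁ B₂) ∧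
    (B₁ ∩ B₂ ≠ ∅ → B₁ ≠ B₂ →
      EMetric.hausdorffEdist B₁ B₂ = max (EMetric.diam B₁) (EMetric.diam B₂)) ∧
    (B₁ = B₂ → EMetric.hausdorffEdist B₁ B₂ = 0) ∧
    (B₁ ≠ B₂ → max (EMetric.diam B₁) (EMetric.diam B₂) ≤ EMetric.hausdorffEdist B₁ B₂) ∧
    (∀ A₁ A₂ : Set X, A₁.Nonempty → A₂.Nonempty → A₁ ⊆ B₁ → A₂ ⊆ B₂ → B₁ ∩ B₂ = ∅ →
      EMetric.hausdorffEdist A₁ A₂ = EMetric.hausdorffEdist B₁ B₂) := by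
  have : IsUltrametricDist X := ⟨hna⟩
  exact stmt_0_general h₁.isCluster h₂.isCluster h₁.nonempty h₂.nonempty
end

section
/- Let (X, d) be a compact non-Archimedean metric space. Let M♭(X) denote the collection of all balls in X and M̄♭(X) = M♭(X) ∪ {{x} : x ∈ X}, regarded as a metric space under the Hausdorff distance d_H. Then (M̄♭(X), d_H) is compact. -/
open scoped ENNReal

/-- `M♭(X)`: the collection of all balls of `X`, inside the space of closed subsets of `X`. -/
def MBall (X : Type*) [MetricSpace X] : Set (TopologicalSpace.Closeds X) :=
  {C | IsBall (C : Set X)}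

/-- `M̄♭(X) = M♭(X) ∪ {{x} : x ∈ X}`, inside the space of closed subsets of `X`
(with the Hausdorff distance as the (e)metric). -/
def MBallBar (X : Type*) [MetricSpace X] : Set (TopologicalSpace.Closeds X) :=
  {C | IsBall (C : Set X) ∨ ∃ x : X, (C : Set X) = {x}}

/-!
Every ball, and every singleton, has the form `closedBall a (dist a b)`: take any centre `a` and a
point `b` of the set at maximal distance from `a`. In a non-Archimedean space this closed ball
depends in a 1-Lipschitz way on `(a, b)`: if `a` and `b` are moved by less than `dist a b`, it does
not change at all, and if they are moved by at most some `δ ≥ dist a b`, the old and the new ball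
lie in a single ball of diameter at most `δ`. Hence the space of balls and singletons is a
continuous image of the compact space `X × X`.
-/

open Metric Set TopologicalSpace

section Ultrametric

variable {X : Type*} [PseudoMetricSpace X] [IsUltrametricDist X]

theorem dist_right_eq_of_dist_lt {x y z : X} (h : dist y z < dist x y) : dist x z = dist x y := by
  rw [IsUltrametricDist.dist_eq_max_of_dist_ne_dist x y z h.ne', max_eq_left h.le]

theorem dist_eq_dist_of_dist_lt {a b a' b' : X} (ha : dist a a' < dist a b)
    (hb : dist b b' < dist a b) : dist a' b' = dist a b := by
  have move_b : dist b' a = dist a b := by rw [dist_comm, dist_right_eq_of_dist_lt hb]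
  have move_a : dist b' a' = dist b' a := dist_right_eq_of_dist_lt (move_b ▸ ha)
  rw [dist_comm, move_a, move_b]

theorem closedBall_dist_eq_of_dist_lt {a b a' b' : X} (ha : dist a a' < dist a b)
    (hb : dist b b' < dist a b) : closedBall a (dist a b) = closedBall a' (dist a' b') := by
  rw [dist_eq_dist_of_dist_lt ha hb,
    IsUltrametricDist.closedBall_eq_of_mem (mem_closedBall'.2 ha.le)]

theorem ediam_closedBall_le_ofReal (x : X) (r : ℝ) :
    ediam (closedBall x r) ≤ ENNReal.ofReal r := by
  refine ediam_le fun y hy z hz ↦ ?_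
  rw [edist_dist]
  exact ENNReal.ofReal_le_ofReal <|
    (dist_triangle_max y x z).trans (max_le hy (mem_closedBall'.1 hz))

theorem hausdorffEDist_closedBall_le_ofReal {a a' : X} {r r' δ : ℝ} (hr₀ : 0 ≤ r) (hr₀' : 0 ≤ r')
    (hr : r ≤ δ) (hr' : r' ≤ δ) (ha : dist a a' ≤ δ) :
    hausdorffEDist (closedBall a r) (closedBall a' r') ≤ ENNReal.ofReal δ := by
  have same_ball : closedBall a δ = closedBall a' δ :=
    IsUltrametricDist.closedBall_eq_of_mem (mem_closedBall'.2 ha)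
  have union_subset_ball : closedBall a r ∪ closedBall a' r' ⊆ closedBall a δ :=
    union_subset (closedBall_subset_closedBall hr)
      (same_ball ▸ closedBall_subset_closedBall hr')
  calc hausdorffEDist (closedBall a r) (closedBall a' r')
      ≤ ediam (closedBall a r ∪ closedBall a' r') :=
        hausdorffEDist_le_ediam (nonempty_closedBall.2 hr₀) (nonempty_closedBall.2 hr₀')
    _ ≤ ediam (closedBall a δ) := ediam_mono union_subset_ball
    _ ≤ ENNReal.ofReal δ := ediam_closedBall_le_ofReal a δ

theorem hausdorffEDist_closedBall_dist_le (a b a' b' : X) :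
    hausdorffEDist (closedBall a (dist a b)) (closedBall a' (dist a' b')) ≤
      ENNReal.ofReal (max (dist a a') (dist b b')) := by
  set δ := max (dist a a') (dist b b')
  have ha : dist a a' ≤ δ := le_max_left _ _
  have hb : dist b b' ≤ δ := le_max_right _ _
  rcases lt_or_ge δ (dist a b) with far | near
  · rw [closedBall_dist_eq_of_dist_lt (ha.trans_lt far) (hb.trans_lt far), hausdorffEDist_self]
    exact zero_le
  · have near' : dist a' b' ≤ δ :=
      calc dist a' b' ≤ max (dist a' a) (dist a b') := dist_triangle_max a' a b'
        _ ≤ max (dist a' a) (max (dist a b) (dist b b')) := by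
          gcongr
          exact dist_triangle_max a b b'
        _ ≤ δ := max_le (dist_comm a a' ▸ ha) (max_le near hb)
    exact hausdorffEDist_closedBall_le_ofReal dist_nonneg dist_nonneg near near' ha

end Ultrametric

theorem exists_eq_closedBall_dist_of_isCompact {X : Type*} [PseudoMetricSpace X] {s : Set X} {a : X}
    (hs : IsCompact s) (ha : a ∈ s) (hball : ∀ y ∈ s, closedBall a (dist a y) ⊆ s) :
    ∃ b, s = closedBall a (dist a b) := by
  obtain ⟨b, hb, hmax⟩ := hs.exists_isMaxOn (f := dist a) ⟨a, ha⟩ (by fun_prop)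
  exact ⟨b, Subset.antisymm (fun y hy ↦ mem_closedBall'.2 (hmax hy)) (hball b hb)⟩

/-- The closed ball `closedBall p.1 (dist p.1 p.2)` as a point of the space of closed sets. In a
non-Archimedean space it is the smallest ball containing both points of the pair `p`, where a
singleton `{a}`, obtained from `p = (a, a)`, counts as a ball; as `p` varies it parametrizes the
balls and singletons of a compact such space. -/
def ballThrough {X : Type*} [PseudoMetricSpace X] (p : X × X) : Closeds X :=
  ⟨closedBall p.1 (dist p.1 p.2), isClosed_closedBall⟩

section BallThrough

variable {X : Type*} [MetricSpace X]

theorem lipschitzWith_ballThrough [IsUltrametricDist X] :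
    LipschitzWith 1 (ballThrough : X × X → Closeds X) := by
  intro p q
  rw [ENNReal.coe_one, one_mul, edist_dist p q]
  exact hausdorffEDist_closedBall_dist_le p.1 p.2 q.1 q.2

theorem ballThrough_mem_mBallBar (p : X × X) : ballThrough p ∈ MBallBar X := by
  obtain ⟨a, b⟩ := p
  rcases eq_or_ne a b with rfl | hab
  · exact Or.inr ⟨a, by simp [ballThrough]⟩
  · exact Or.inl ⟨a, dist a b, dist_pos.2 hab, Or.inr rfl⟩

theorem IsBall.exists_eq_closedBall_dist [CompactSpace X] [IsUltrametricDist X] {B : Set X}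
    (hB : IsBall B) : ∃ a b, B = closedBall a (dist a b) := by
  obtain ⟨a, r, hr, rfl | rfl⟩ := hB
  · exact ⟨a, exists_eq_closedBall_dist_of_isCompact
      (IsUltrametricDist.isClosed_ball a r).isCompact (mem_ball_self hr)
      fun y hy ↦ closedBall_subset_ball (mem_ball'.1 hy)⟩
  · exact ⟨a, exists_eq_closedBall_dist_of_isCompact isClosed_closedBall.isCompact
      (mem_closedBall_self hr.le) fun y hy ↦ closedBall_subset_closedBall (mem_closedBall'.1 hy)⟩

theorem mBallBar_eq_range_ballThrough [CompactSpace X] [IsUltrametricDist X] :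
    MBallBar X = range ballThrough := by
  refine Subset.antisymm ?_ (range_subset_iff.2 ballThrough_mem_mBallBar)
  rintro C (hball | ⟨a, hsingleton⟩)
  · obtain ⟨a, b, hab⟩ := hball.exists_eq_closedBall_dist
    exact ⟨(a, b), Closeds.ext hab.symm⟩
  · exact ⟨(a, a), Closeds.ext (by simp [ballThrough, hsingleton])⟩

end BallThrough

theorem stmt_7 {X : Type*} [MetricSpace X] [CompactSpace X]
    (hna : ∀ x y z : X, dist x z ≤ max (dist x y) (dist y z)) :
    CompactSpace (MBallBar X) := by
  have : IsUltrametricDist X := ⟨hna⟩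
  rw [← isCompact_iff_compactSpace, mBallBar_eq_range_ballThrough]
  exact isCompact_range lipschitzWith_ballThrough.continuous
end
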